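/- Let α,β > −1/2 and let c⁽¹⁾ > 0 be fixed. Then there exists a constant C > 0 depending only on α,β (and c⁽¹⁾) such that for every positive integer L: (i) |v_L^{(α,β)}(1,cos θ)| ≤ C L^{2α+2} for all θ with 0 ≤ θ ≤ c⁽¹⁾/L, and (ii) |v_L^{(α,β)}(1,cos θ)| ≤ C L^{α+β+1} for all θ with π − c⁽¹⁾/L ≤ θ ≤ π. -/

import Mathlib

open MeasureTheory Real
open scoped ENNReal NNReal

/-- The classical Jacobi polynomial `P_n^{(a,b)}` (hypergeometric representation,
normalised so that `P_n^{(a,b)}(1) = Γ(n+a+1)/(Γ(n+1)Γ(a+1))`). -/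
noncomputable def jacobiP (a b : ℝ) (n : ℕ) (x : ℝ) : ℝ :=
  ∑ s ∈ Finset.range (n + 1),
    (Real.Gamma ((n : ℝ) + a + 1) /
        (Real.Gamma ((s : ℝ) + a + 1) * (Nat.factorial (n - s) : ℝ))) *
      (Real.Gamma ((n : ℝ) + b + 1) /
        (Real.Gamma ((n : ℝ) - (s : ℝ) + b + 1) * (Nat.factorial s : ℝ))) *
      ((x - 1) / 2) ^ s * ((x + 1) / 2) ^ (n - s)

/-- `M_ℓ^{(a,b)}`, the `L₂(w_{a,b})` normalisation constant of `P_ℓ^{(a,b)}`. -/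
noncomputable def jacobiM (a b : ℝ) (ℓ : ℕ) : ℝ :=
  (2 : ℝ) ^ (a + b + 1) / (2 * (ℓ : ℝ) + a + b + 1) *
    (Real.Gamma ((ℓ : ℝ) + a + 1) * Real.Gamma ((ℓ : ℝ) + b + 1)) /
    (Real.Gamma ((ℓ : ℝ) + 1) * Real.Gamma ((ℓ : ℝ) + a + b + 1))

/-- The generalised Dirichlet kernel
`v_L^{(a,b)}(t,s) = Σ_{ℓ=0}^{L} (M_ℓ^{(a,b)})⁻¹ P_ℓ^{(a,b)}(t) P_ℓ^{(a,b)}(s)`. -/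
noncomputable def dirichletJ (a b : ℝ) (L : ℕ) (t s : ℝ) : ℝ :=
  ∑ ℓ ∈ Finset.range (L + 1), (jacobiM a b ℓ)⁻¹ * jacobiP a b ℓ t * jacobiP a b ℓ s

/-- The filtered Jacobi kernel
`v_{L,g}^{(a,b)}(t,s) = Σ_{ℓ=0}^{2L−1} g(ℓ/L) (M_ℓ^{(a,b)})⁻¹ P_ℓ^{(a,b)}(t) P_ℓ^{(a,b)}(s)`. -/
noncomputable def filteredJ (a b : ℝ) (g : ℝ → ℝ) (L : ℕ) (t s : ℝ) : ℝ :=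
  ∑ ℓ ∈ Finset.range (2 * L),
    g ((ℓ : ℝ) / (L : ℝ)) * (jacobiM a b ℓ)⁻¹ * jacobiP a b ℓ t * jacobiP a b ℓ s

/-- `Z(d,ℓ)`, the dimension of the space of spherical harmonics of degree `ℓ` on `S^d`. -/
noncomputable def Zdim (d ℓ : ℕ) : ℝ :=
  (2 * (ℓ : ℝ) + (d : ℝ) - 1) * Real.Gamma ((ℓ : ℝ) + (d : ℝ) - 1) /
    (Real.Gamma (d : ℝ) * Real.Gamma ((ℓ : ℝ) + 1))

/-- The normalised Legendre polynomial `P_ℓ^{(d+1)}` for `S^d`. -/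
noncomputable def normLegendre (d ℓ : ℕ) (t : ℝ) : ℝ :=
  jacobiP (((d : ℝ) - 2) / 2) (((d : ℝ) - 2) / 2) ℓ t /
    jacobiP (((d : ℝ) - 2) / 2) (((d : ℝ) - 2) / 2) ℓ 1

/-- The Dirichlet kernel on `S^d`: `v_L^{(d)}(t) = Σ_{ℓ=0}^L Z(d,ℓ) P_ℓ^{(d+1)}(t)`. -/
noncomputable def sphDirichlet (d L : ℕ) (t : ℝ) : ℝ :=
  ∑ ℓ ∈ Finset.range (L + 1), Zdim d ℓ * normLegendre d ℓ t

/-- The filtered kernel on `S^d`: `v_{L,g}^{(d)}(t) = Σ_{ℓ=0}^∞ g(ℓ/L) Z(d,ℓ) P_ℓ^{(d+1)}(t)`. -/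
noncomputable def sphFiltered (d : ℕ) (g : ℝ → ℝ) (L : ℕ) (t : ℝ) : ℝ :=
  ∑' ℓ : ℕ, g ((ℓ : ℝ) / (L : ℝ)) * Zdim d ℓ * normLegendre d ℓ t

/-- The surface area `|S^n| = 2π^{(n+1)/2}/Γ((n+1)/2)` of the unit sphere `S^n`. -/
noncomputable def sphereArea (n : ℕ) : ℝ :=
  2 * Real.pi ^ (((n : ℝ) + 1) / 2) / Real.Gamma (((n : ℝ) + 1) / 2)

/-- `m_{a,b}(θ) = π^{−1/2} (sin(θ/2))^{−a−1/2} (cos(θ/2))^{−b−1/2}`. -/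
noncomputable def mAB (a b θ : ℝ) : ℝ :=
  Real.pi ^ (-(1 / 2 : ℝ)) * Real.sin (θ / 2) ^ (-a - 1 / 2) *
    Real.cos (θ / 2) ^ (-b - 1 / 2)

/-- `ω_γ(z) = z − γπ/2 − π/4`. -/
noncomputable def omegaA (γ z : ℝ) : ℝ := z - γ * Real.pi / 2 - Real.pi / 4

/-!
At the endpoint `t = 1` the Dirichlet kernel telescopes: the contiguous relation
`(2n+a+b+1) P_n^{(a,b)} = (n+a+b+1) P_n^{(a+1,b)} - (n+b) P_{n-1}^{(a+1,b)}` turns each summand into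
a difference, so that `v_L^{(a,b)}(1,·)` is `P_L^{(a+1,b)}` times a Gamma quotient of order
`L^{a+1}`. It remains to bound a Jacobi polynomial near the endpoints. Comparing coefficients with
an exponential series gives `|P_n^{(a,b)}(x)| ≤ P_n^{(a,b)}(1) exp(n(n+b)(1-x)/(2(a+1)))` for
`x ∈ [-1,1]`, and for `x = cos θ` with `θ = O(1/n)` the exponent stays bounded while
`P_n^{(a,b)}(1)` has order `n^a`. The endpoint `-1` follows from the reflection
`P_n^{(a,b)}(-x) = (-1)^n P_n^{(b,a)}(x)`.
-/

section GammaRatio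

open Filter Topology Asymptotics

variable {x y : ℝ}

theorem Gamma_natCast_add_eq_mul_prod (hx : ∀ m : ℕ, x ≠ -m) (n : ℕ) :
    Gamma (n + x) = Gamma x * ∏ j ∈ Finset.range n, (x + j) := by
  induction n with
  | zero => simp
  | succ n ih =>
    have hne : (n : ℝ) + x ≠ 0 := fun h ↦ hx n (by linarith)
    rw [Finset.prod_range_succ, ← mul_assoc, ← ih, ← add_comm (n : ℝ) x, mul_comm,
      ← Gamma_add_one hne]
    push_cast
    ring_nf

theorem tendsto_Gamma_natCast_add_div (hx : ∀ m : ℕ, x ≠ -m) :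
    Tendsto (fun n : ℕ ↦ Gamma (n + x) / ((n : ℝ) ^ (x - 1) * n.factorial)) atTop (𝓝 1) := by
  have hΓ : Gamma x ≠ 0 := Gamma_ne_zero hx
  have hlim : Tendsto (fun n : ℕ ↦ Gamma x / GammaSeq x n * (n / (n + x))) atTop (𝓝 1) := by
    simpa [hΓ] using ((tendsto_const_nhds (x := Gamma x)).div
      (GammaSeq_tendsto_Gamma x) hΓ).mul (tendsto_natCast_div_add_atTop x)
  refine hlim.congr' ?_
  filter_upwards [eventually_gt_atTop 0] with n hn
  have hn' : (0 : ℝ) < n := Nat.cast_pos.mpr hn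
  have hne : (n : ℝ) + x ≠ 0 := fun h ↦ hx n (by linarith)
  rw [Gamma_natCast_add_eq_mul_prod hx, GammaSeq, Finset.prod_range_succ, rpow_sub_one hn'.ne',
    add_comm x n]
  field_simp

theorem isEquivalent_Gamma_natCast_add_div (hx : ∀ m : ℕ, x ≠ -m) (hy : ∀ m : ℕ, y ≠ -m) :
    (fun n : ℕ ↦ Gamma (n + x) / Gamma (n + y)) ~[atTop] fun n ↦ (n : ℝ) ^ (x - y) := by
  refine isEquivalent_of_tendsto_one ?_
  have hlim := (tendsto_Gamma_natCast_add_div hx).div (tendsto_Gamma_natCast_add_div hy) one_ne_zero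
  rw [div_one] at hlim
  refine hlim.congr' ?_
  filter_upwards [eventually_gt_atTop 0] with n hn
  have hn' : (0 : ℝ) < n := Nat.cast_pos.mpr hn
  have hsplit : (n : ℝ) ^ (x - y) = n ^ (x - 1) / n ^ (y - 1) := by
    rw [← rpow_sub hn', sub_sub_sub_cancel_right]
  simp only [Pi.div_apply, hsplit]
  have := (rpow_pos_of_pos hn' (x - 1)).ne'
  have := (rpow_pos_of_pos hn' (y - 1)).ne'
  field_simp

theorem exists_Gamma_natCast_add_div_le (hx : 0 < x) (hy : 0 < y) :
    ∃ C > 0, ∀ n : ℕ, 1 ≤ n → Gamma (n + x) / Gamma (n + y) ≤ C * (n : ℝ) ^ (x - y) := by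
  have hne {z : ℝ} (hz : 0 < z) (m : ℕ) : z ≠ -m :=
    ((neg_nonpos.mpr m.cast_nonneg).trans_lt hz).ne'
  obtain ⟨C, hC, h⟩ := bound_of_isBigO_nat_atTop
    (isEquivalent_Gamma_natCast_add_div (hne hx) (hne hy)).isBigO
  refine ⟨C, hC, fun n hn ↦ (le_norm_self _).trans ?_⟩
  have hpos : 0 < (n : ℝ) ^ (x - y) := rpow_pos_of_pos (Nat.cast_pos.mpr hn) _
  simpa only [norm_of_nonneg hpos.le] using h hpos.ne'

end GammaRatio

section Coefficients

variable {a b : ℝ}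

/-- The coefficient of `((x - 1) / 2) ^ s * ((x + 1) / 2) ^ m` in `P_{s+m}^{(a,b)}(x)`. Indexing by
the two exponents makes the symmetry `(a, s) ↔ (b, m)` visible. -/
noncomputable def jacobiCoeff (a b : ℝ) (s m : ℕ) : ℝ :=
  Gamma (s + m + a + 1) / (Gamma (s + a + 1) * m.factorial) *
    (Gamma (s + m + b + 1) / (Gamma (m + b + 1) * s.factorial))

theorem jacobiCoeff_swap (a b : ℝ) (s m : ℕ) : jacobiCoeff a b s m = jacobiCoeff b a m s := by
  rw [jacobiCoeff, jacobiCoeff, add_comm (m : ℝ) s, mul_comm]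

theorem jacobiCoeff_pos (ha : -1 < a) (hb : -1 < b) (s m : ℕ) : 0 < jacobiCoeff a b s m := by
  have hΓ {c t : ℝ} (hc : -1 < c) (ht : 0 ≤ t) : 0 < Gamma (t + c + 1) :=
    Gamma_pos_of_pos (by linarith)
  have := hΓ ha s.cast_nonneg
  have := hΓ hb m.cast_nonneg
  have := hΓ ha (show 0 ≤ (s : ℝ) + m by positivity)
  have := hΓ hb (show 0 ≤ (s : ℝ) + m by positivity)
  unfold jacobiCoeff
  positivity

theorem jacobiCoeff_add_one_left (ha : -1 < a) (b : ℝ) (s m : ℕ) :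
    (s + a + 1) * jacobiCoeff (a + 1) b s m = (s + m + a + 1) * jacobiCoeff a b s m := by
  have hs : 0 < (s : ℝ) + a + 1 := by linarith [s.cast_nonneg (α := ℝ)]
  have hsm : 0 < (s : ℝ) + m + a + 1 := by linarith [m.cast_nonneg (α := ℝ)]
  rw [jacobiCoeff, jacobiCoeff, ← add_assoc, ← add_assoc, Gamma_add_one hs.ne',
    Gamma_add_one hsm.ne']
  field_simp

theorem succ_mul_jacobiCoeff_succ_left (a : ℝ) (hb : -1 < b) (s m : ℕ) :
    (s + 1) * jacobiCoeff a b (s + 1) m = (s + m + b + 1) * jacobiCoeff (a + 1) b s m := by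
  have hsm : (s : ℝ) + m + b + 1 ≠ 0 := by
    linarith [s.cast_nonneg (α := ℝ), m.cast_nonneg (α := ℝ)]
  have ha₁ : (s : ℝ) + 1 + a + 1 = s + (a + 1) + 1 := by ring
  have ha₂ : (s : ℝ) + 1 + m + a + 1 = s + m + (a + 1) + 1 := by ring
  have hb₁ : (s : ℝ) + 1 + m + b + 1 = s + m + b + 1 + 1 := by ring
  simp only [jacobiCoeff, Nat.factorial_succ, Nat.cast_mul, Nat.cast_succ, ha₁, ha₂, hb₁,
    Gamma_add_one hsm]
  field_simp

theorem succ_mul_jacobiCoeff_succ_right (ha : -1 < a) (hb : -1 < b) (s m : ℕ) :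
    (m + 1) * (m + b + 1) * jacobiCoeff a b s (m + 1) =
      (s + m + b + 1) * (s + a + 1) * jacobiCoeff (a + 1) b s m := by
  have hsucc := succ_mul_jacobiCoeff_succ_left b ha m s
  have hb_add := jacobiCoeff_add_one_left hb a m s
  rw [jacobiCoeff_swap a b s (m + 1)]
  rw [← jacobiCoeff_swap a b s m] at hb_add
  linear_combination (m + b + 1) * hsucc + (m + s + a + 1) * hb_add
    - (s + m + b + 1) * jacobiCoeff_add_one_left ha b s m

theorem jacobiCoeff_succ_mul_eq (ha : -1 < a) (hb : -1 < b) (s m : ℕ) :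
    (s + 1) * (s + a + 1) * jacobiCoeff a b (s + 1) m =
      (m + 1) * (m + b + 1) * jacobiCoeff a b s (m + 1) := by
  linear_combination (s + a + 1) * succ_mul_jacobiCoeff_succ_left a hb s m
    - succ_mul_jacobiCoeff_succ_right ha hb s m

theorem jacobiCoeff_contiguous (ha : -1 < a) (hb : -1 < b) (s m : ℕ) :
    (s + m + a + b + 2) * jacobiCoeff (a + 1) b s (m + 1) =
      (s + 2 * m + a + b + 3) * jacobiCoeff a b s (m + 1)
        + (s + m + b + 1) * jacobiCoeff (a + 1) b s m := by
  have hs : (s : ℝ) + a + 1 ≠ 0 := by linarith [s.cast_nonneg (α := ℝ)]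
  have hadd := jacobiCoeff_add_one_left ha b s (m + 1)
  push_cast at hadd
  apply mul_left_cancel₀ hs
  linear_combination (s + m + a + b + 2) * hadd + succ_mul_jacobiCoeff_succ_right ha hb s m

theorem jacobiCoeff_le (ha : -1 < a) (hb : -1 < b) (s m : ℕ) :
    jacobiCoeff a b s m ≤ jacobiCoeff a b 0 (s + m) *
      (((s + m) * (s + m + b) / (a + 1)) ^ s / s.factorial) := by
  induction s generalizing m with
  | zero => simp
  | succ s ih =>
    have := s.cast_nonneg (α := ℝ)
    have := m.cast_nonneg (α := ℝ)
    have ha' : 0 < a + 1 := by linarith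
    have hsa : 0 < (s : ℝ) + a + 1 := by linarith
    have hnum : 0 ≤ (s + 1 + m) * (s + 1 + m + b) := mul_nonneg (by positivity) (by linarith)
    have hratio : (m + 1) * (m + b + 1) / ((s + 1) * (s + a + 1)) ≤
        (s + 1 + m) * (s + 1 + m + b) / ((s + 1) * (a + 1)) :=
      div_le_div₀ hnum
        (mul_le_mul (by linarith) (by linarith) (by linarith) (by linarith)) (by positivity)
        (mul_le_mul_of_nonneg_left (by linarith) (by positivity))
    have hsucc : jacobiCoeff a b (s + 1) m =
        (m + 1) * (m + b + 1) / ((s + 1) * (s + a + 1)) * jacobiCoeff a b s (m + 1) := by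
      field_simp
      linear_combination jacobiCoeff_succ_mul_eq ha hb s m
    have ih := ih (m + 1)
    push_cast at ih ⊢
    rw [← add_assoc, add_right_comm s m 1, add_comm (m : ℝ) 1, ← add_assoc (s : ℝ)] at ih
    calc jacobiCoeff a b (s + 1) m
        ≤ (s + 1 + m) * (s + 1 + m + b) / ((s + 1) * (a + 1)) *
          (jacobiCoeff a b 0 (s + 1 + m) *
            (((s + 1 + m) * (s + 1 + m + b) / (a + 1)) ^ s / s.factorial)) := by
          rw [hsucc]
          exact mul_le_mul hratio ih (jacobiCoeff_pos ha hb s (m + 1)).le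
            (div_nonneg hnum (by positivity))
      _ = _ := by
          rw [Nat.factorial_succ, Nat.cast_mul, Nat.cast_succ, pow_succ]
          field_simp

end Coefficients

section JacobiForm

open Finset.HasAntidiagonal (antidiagonal mem_antidiagonal)

variable {a b : ℝ}

/-- The homogeneous form of degree `n` whose value at `u = (x - 1) / 2`, `w = (x + 1) / 2` is the
Jacobi polynomial `P_n^{(a,b)}(x)`. -/
noncomputable def jacobiForm (a b : ℝ) (n : ℕ) (u w : ℝ) : ℝ :=
  ∑ p ∈ antidiagonal n, jacobiCoeff a b p.1 p.2 * (u ^ p.1 * w ^ p.2)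

theorem jacobiP_eq_jacobiForm (a b : ℝ) (n : ℕ) (x : ℝ) :
    jacobiP a b n x = jacobiForm a b n ((x - 1) / 2) ((x + 1) / 2) := by
  rw [jacobiP, jacobiForm, Finset.Nat.sum_antidiagonal_eq_sum_range_succ_mk]
  refine Finset.sum_congr rfl fun s hs ↦ ?_
  have hsn : s ≤ n := Finset.mem_range_succ_iff.mp hs
  rw [jacobiCoeff, Nat.cast_sub hsn, add_sub_cancel, mul_assoc _ (_ ^ s)]

theorem jacobiForm_swap (a b : ℝ) (n : ℕ) (u w : ℝ) :
    jacobiForm a b n u w = jacobiForm b a n w u := by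
  rw [jacobiForm, ← Finset.Nat.sum_antidiagonal_swap]
  refine Finset.sum_congr rfl fun p _ ↦ ?_
  rw [jacobiCoeff_swap, Prod.fst_swap, Prod.snd_swap, mul_comm (u ^ _)]

theorem jacobiForm_neg_neg (a b : ℝ) (n : ℕ) (u w : ℝ) :
    jacobiForm a b n (-u) (-w) = (-1) ^ n * jacobiForm a b n u w := by
  rw [jacobiForm, jacobiForm, Finset.mul_sum]
  refine Finset.sum_congr rfl fun p hp ↦ ?_
  rw [← mem_antidiagonal.mp hp, neg_pow u, neg_pow w, pow_add]
  ring

theorem sum_fst_mul_jacobiCoeff (a : ℝ) (hb : -1 < b) (n : ℕ) (u w : ℝ) :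
    ∑ p ∈ antidiagonal (n + 1), p.1 * jacobiCoeff a b p.1 p.2 * (u ^ p.1 * w ^ p.2) =
      (n + b + 1) * (u * jacobiForm (a + 1) b n u w) := by
  rw [Finset.Nat.sum_antidiagonal_succ, jacobiForm, Finset.mul_sum, Finset.mul_sum]
  simp only [Nat.cast_zero, zero_mul, zero_add]
  refine Finset.sum_congr rfl fun p hp ↦ ?_
  rw [← mem_antidiagonal.mp hp, Nat.cast_succ, succ_mul_jacobiCoeff_succ_left a hb]
  push_cast
  ring

theorem jacobiForm_contiguous (ha : -1 < a) (hb : -1 < b) (n : ℕ) (u w : ℝ) :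
    (n + a + b + 2) * jacobiForm (a + 1) b (n + 1) u w =
      (2 * n + a + b + 3) * jacobiForm a b (n + 1) u w
        + (n + b + 1) * ((w - u) * jacobiForm (a + 1) b n u w) := by
  have hlast : jacobiCoeff (a + 1) b (n + 1) 0 = jacobiCoeff a b (n + 1) 0 := by
    have hadd := jacobiCoeff_add_one_left ha b (n + 1) 0
    rw [Nat.cast_zero, add_zero] at hadd
    refine mul_left_cancel₀ ?_ hadd
    push_cast
    linarith [n.cast_nonneg (α := ℝ)]
  have hsnd : ∑ p ∈ antidiagonal (n + 1), ((n + a + b + 2) * jacobiCoeff (a + 1) b p.1 p.2 -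
      (2 * n + a + b + 3 - p.1) * jacobiCoeff a b p.1 p.2) * (u ^ p.1 * w ^ p.2) =
      (n + b + 1) * (w * jacobiForm (a + 1) b n u w) := by
    rw [Finset.Nat.sum_antidiagonal_succ', hlast, jacobiForm, Finset.mul_sum, Finset.mul_sum]
    refine (add_eq_right.mpr ?_).trans (Finset.sum_congr rfl fun p hp ↦ ?_)
    · push_cast
      ring
    · rw [← mem_antidiagonal.mp hp]
      push_cast
      linear_combination u ^ p.1 * w ^ (p.2 + 1) * jacobiCoeff_contiguous ha hb p.1 p.2
  have hsplit : (n + a + b + 2) * jacobiForm (a + 1) b (n + 1) u w -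
      (2 * n + a + b + 3) * jacobiForm a b (n + 1) u w =
      ∑ p ∈ antidiagonal (n + 1), ((n + a + b + 2) * jacobiCoeff (a + 1) b p.1 p.2 -
        (2 * n + a + b + 3 - p.1) * jacobiCoeff a b p.1 p.2) * (u ^ p.1 * w ^ p.2) -
      ∑ p ∈ antidiagonal (n + 1), p.1 * jacobiCoeff a b p.1 p.2 * (u ^ p.1 * w ^ p.2) := by
    simp only [jacobiForm, Finset.mul_sum, ← Finset.sum_sub_distrib]
    exact Finset.sum_congr rfl fun p _ ↦ by ring
  rw [hsnd, sum_fst_mul_jacobiCoeff a hb] at hsplit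
  linear_combination hsplit

theorem abs_jacobiForm_le (ha : -1 < a) (hb : -1 < b) (n : ℕ) (u : ℝ) {w : ℝ} (hw : |w| ≤ 1) :
    |jacobiForm a b n u w| ≤ jacobiCoeff a b 0 n * exp (n * (n + b) / (a + 1) * |u|) := by
  set K : ℝ := n * (n + b) / (a + 1) with hK
  have hKu : 0 ≤ K * |u| := by
    refine mul_nonneg (div_nonneg ?_ (by linarith)) (abs_nonneg u)
    rcases n.eq_zero_or_pos with rfl | hn
    · simp
    · have : (1 : ℝ) ≤ n := Nat.one_le_cast.mpr hn
      exact mul_nonneg (by linarith) (by linarith)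
  have hterm : ∀ p ∈ antidiagonal n, |jacobiCoeff a b p.1 p.2 * (u ^ p.1 * w ^ p.2)| ≤
      jacobiCoeff a b 0 n * ((K * |u|) ^ p.1 / p.1.factorial) := by
    intro p hp
    have hcoeff := jacobiCoeff_le ha hb p.1 p.2
    rw [← Nat.cast_add, mem_antidiagonal.mp hp, ← hK] at hcoeff
    rw [abs_mul, abs_mul, abs_pow, abs_pow, abs_of_pos (jacobiCoeff_pos ha hb p.1 p.2)]
    calc jacobiCoeff a b p.1 p.2 * (|u| ^ p.1 * |w| ^ p.2)
        ≤ jacobiCoeff a b 0 n * (K ^ p.1 / p.1.factorial) * (|u| ^ p.1 * 1) := by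
          gcongr
          · exact (jacobiCoeff_pos ha hb p.1 p.2).le.trans hcoeff
          · exact pow_le_one₀ (abs_nonneg w) hw
      _ = jacobiCoeff a b 0 n * ((K * |u|) ^ p.1 / p.1.factorial) := by
          rw [mul_pow]
          ring
  calc |jacobiForm a b n u w|
      ≤ ∑ p ∈ antidiagonal n, jacobiCoeff a b 0 n * ((K * |u|) ^ p.1 / p.1.factorial) :=
        (Finset.abs_sum_le_sum_abs _ _).trans (Finset.sum_le_sum hterm)
    _ = jacobiCoeff a b 0 n * ∑ s ∈ Finset.range (n + 1), (K * |u|) ^ s / s.factorial := by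
        rw [← Finset.mul_sum, Finset.Nat.sum_antidiagonal_eq_sum_range_succ_mk]
    _ ≤ jacobiCoeff a b 0 n * exp (K * |u|) :=
        mul_le_mul_of_nonneg_left (sum_le_exp_of_nonneg hKu _) (jacobiCoeff_pos ha hb 0 n).le

end JacobiForm

section JacobiPolynomial

variable {a b : ℝ}

theorem jacobiP_one_eq_jacobiCoeff (a b : ℝ) (n : ℕ) : jacobiP a b n 1 = jacobiCoeff a b 0 n := by
  rw [jacobiP_eq_jacobiForm, jacobiForm, Finset.sum_eq_single (0, n)]
  · norm_num
  · rintro ⟨s, m⟩ hp hne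
    have hs : s ≠ 0 := by
      rintro rfl
      exact hne (by simpa using hp)
    simp [hs]
  · simp

theorem jacobiP_one (a : ℝ) (hb : -1 < b) (n : ℕ) :
    jacobiP a b n 1 = Gamma (n + a + 1) / (Gamma (a + 1) * n.factorial) := by
  have hΓ : Gamma (n + b + 1) ≠ 0 :=
    (Gamma_pos_of_pos (by linarith [n.cast_nonneg (α := ℝ)])).ne'
  simp [jacobiP_one_eq_jacobiCoeff, jacobiCoeff, hΓ]

theorem jacobiP_neg (a b : ℝ) (n : ℕ) (x : ℝ) :
    jacobiP a b n (-x) = (-1) ^ n * jacobiP b a n x := by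
  rw [jacobiP_eq_jacobiForm, jacobiP_eq_jacobiForm, jacobiForm_swap, ← jacobiForm_neg_neg]
  ring_nf

theorem jacobiP_contiguous (ha : -1 < a) (hb : -1 < b) (n : ℕ) (x : ℝ) :
    (2 * n + a + b + 3) * jacobiP a b (n + 1) x =
      (n + a + b + 2) * jacobiP (a + 1) b (n + 1) x - (n + b + 1) * jacobiP (a + 1) b n x := by
  simp only [jacobiP_eq_jacobiForm]
  linear_combination -jacobiForm_contiguous ha hb n ((x - 1) / 2) ((x + 1) / 2)

theorem abs_jacobiP_le (ha : -1 < a) (hb : -1 < b) (n : ℕ) {x : ℝ} (hx : |x| ≤ 1) :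
    |jacobiP a b n x| ≤ jacobiP a b n 1 * exp (n * (n + b) / (a + 1) * ((1 - x) / 2)) := by
  obtain ⟨hx₁, hx₂⟩ := abs_le.mp hx
  have hw : |(x + 1) / 2| ≤ 1 := abs_le.mpr ⟨by linarith, by linarith⟩
  have hu : |(x - 1) / 2| = (1 - x) / 2 := by
    rw [abs_of_nonpos (by linarith)]
    ring
  simpa only [jacobiP_one_eq_jacobiCoeff, jacobiP_eq_jacobiForm a b n x, hu] using
    abs_jacobiForm_le ha hb n ((x - 1) / 2) hw

theorem exists_jacobiP_one_le (ha : -1 < a) (hb : -1 < b) :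
    ∃ C > 0, ∀ n : ℕ, 1 ≤ n → jacobiP a b n 1 ≤ C * (n : ℝ) ^ a := by
  have hΓ : 0 < Gamma (a + 1) := Gamma_pos_of_pos (by linarith)
  obtain ⟨C, hC, h⟩ := exists_Gamma_natCast_add_div_le (show 0 < a + 1 by linarith) one_pos
  refine ⟨C / Gamma (a + 1), by positivity, fun n hn ↦ ?_⟩
  have hn := h n hn
  rw [← add_assoc, add_sub_cancel_right, Gamma_nat_eq_factorial] at hn
  rw [jacobiP_one a hb, mul_comm (Gamma _), ← div_div, div_mul_eq_mul_div]
  gcongr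

theorem exists_abs_jacobiP_cos_le (ha : -1 < a) (hb : -1 < b) (c : ℝ) :
    ∃ C > 0, ∀ n : ℕ, 1 ≤ n → ∀ θ : ℝ, |θ| ≤ c / n →
      |jacobiP a b n (cos θ)| ≤ C * (n : ℝ) ^ a := by
  have ha' : 0 < a + 1 := by linarith
  obtain ⟨C, hC, h⟩ := exists_jacobiP_one_le ha hb
  refine ⟨C * exp ((1 + |b|) / (a + 1) * (c ^ 2 / 4)), by positivity, fun n hn θ hθ ↦ ?_⟩
  have hn₁ : (1 : ℝ) ≤ n := Nat.one_le_cast.mpr hn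
  have hcos : (1 - cos θ) / 2 ≤ (c / n) ^ 2 / 4 := by
    have := one_sub_sq_div_two_le_cos (x := θ)
    have := sq_le_sq' (neg_le_of_abs_le hθ) (le_of_abs_le hθ)
    linarith
  have hexp : n * (n + b) / (a + 1) * ((1 - cos θ) / 2) ≤ (1 + |b|) / (a + 1) * (c ^ 2 / 4) :=
    calc n * (n + b) / (a + 1) * ((1 - cos θ) / 2)
        ≤ n * (n + n * |b|) / (a + 1) * ((c / n) ^ 2 / 4) := by
          gcongr
          · linarith [cos_le_one θ]
          · exact (le_abs_self b).trans (le_mul_of_one_le_left (abs_nonneg b) hn₁)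
      _ = (1 + |b|) / (a + 1) * (c ^ 2 / 4) := by field_simp
  calc |jacobiP a b n (cos θ)|
      ≤ jacobiP a b n 1 * exp (n * (n + b) / (a + 1) * ((1 - cos θ) / 2)) :=
        abs_jacobiP_le ha hb n (abs_cos_le_one θ)
    _ ≤ C * (n : ℝ) ^ a * exp ((1 + |b|) / (a + 1) * (c ^ 2 / 4)) := by
        gcongr
        exact h n hn
    _ = C * exp ((1 + |b|) / (a + 1) * (c ^ 2 / 4)) * (n : ℝ) ^ a := by ring

theorem exists_abs_jacobiP_cos_le_near_pi (ha : -1 < a) (hb : -1 < b) (c : ℝ) :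
    ∃ C > 0, ∀ n : ℕ, 1 ≤ n → ∀ θ : ℝ, |π - θ| ≤ c / n →
      |jacobiP a b n (cos θ)| ≤ C * (n : ℝ) ^ b := by
  obtain ⟨C, hC, h⟩ := exists_abs_jacobiP_cos_le hb ha c
  refine ⟨C, hC, fun n hn θ hθ ↦ ?_⟩
  have hreflect : |jacobiP a b n (cos θ)| = |jacobiP b a n (cos (π - θ))| := by
    rw [← neg_neg (cos θ), ← cos_pi_sub, jacobiP_neg, abs_mul, abs_neg_one_pow, one_mul]
  exact hreflect ▸ h n hn (π - θ) hθ

end JacobiPolynomial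

section DirichletKernel

variable {a b : ℝ}

theorem inv_jacobiM_mul_jacobiP_one (ha : -1 < a) (hb : -1 < b) (n : ℕ) :
    (jacobiM a b n)⁻¹ * jacobiP a b n 1 = (2 * n + a + b + 1) * Gamma (n + a + b + 1) /
      (2 ^ (a + b + 1) * Gamma (a + 1) * Gamma (n + b + 1)) := by
  have hΓ : Gamma (n + a + 1) ≠ 0 :=
    (Gamma_pos_of_pos (by linarith [n.cast_nonneg (α := ℝ)])).ne'
  rw [jacobiM, jacobiP_one a hb, Gamma_nat_eq_factorial]
  field_simp

-- `jacobiM a b 0` is a junk value at `a + b = -1`: there `(a + b + 1) * Gamma (a + b + 1)` is `0`,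
-- not its limit `1`.
theorem dirichletJ_one_eq (ha : -1 < a) (hb : -1 < b) (hab : a + b ≠ -1) (L : ℕ) (x : ℝ) :
    dirichletJ a b L 1 x = Gamma (L + a + b + 2) /
      (2 ^ (a + b + 1) * Gamma (a + 1) * Gamma (L + b + 1)) * jacobiP (a + 1) b L x := by
  rw [dirichletJ]
  simp only [inv_jacobiM_mul_jacobiP_one ha hb]
  induction L with
  | zero =>
    have hab₁ : a + b + 1 ≠ 0 := fun h ↦ hab (by linarith)
    have hΓ : Gamma (a + b + 2) = (a + b + 1) * Gamma (a + b + 1) := by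
      rw [← Gamma_add_one hab₁]
      ring_nf
    have hΓa : Gamma (a + 1) ≠ 0 := (Gamma_pos_of_pos (by linarith)).ne'
    have hΓa' : Gamma (a + 1 + 1) ≠ 0 := (Gamma_pos_of_pos (by linarith)).ne'
    have hΓb : Gamma (b + 1) ≠ 0 := (Gamma_pos_of_pos (by linarith)).ne'
    simp [jacobiP, hΓ, hΓa, hΓa', hΓb]
  | succ n ih =>
    have := n.cast_nonneg (α := ℝ)
    have hb₁ : (n : ℝ) + b + 1 ≠ 0 := by linarith
    have hΓab : Gamma ((n + 1 : ℕ) + a + b + 2) = (n + a + b + 2) * Gamma (n + a + b + 2) := by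
      rw [← Gamma_add_one (by linarith)]
      push_cast
      ring_nf
    have hΓb : Gamma ((n + 1 : ℕ) + b + 1) = (n + b + 1) * Gamma (n + b + 1) := by
      rw [← Gamma_add_one hb₁]
      push_cast
      ring_nf
    have hΓab' : Gamma ((n + 1 : ℕ) + a + b + 1) = Gamma (n + a + b + 2) := by
      push_cast
      ring_nf
    rw [Finset.sum_range_succ, ih, hΓab, hΓb, hΓab']
    have hΓa : Gamma (a + 1) ≠ 0 := (Gamma_pos_of_pos (by linarith)).ne'
    have hΓb' : Gamma (n + b + 1) ≠ 0 := (Gamma_pos_of_pos (by linarith)).ne'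
    push_cast
    field_simp
    linear_combination Gamma (n + a + b + 2) * jacobiP_contiguous ha hb n x

theorem exists_abs_dirichletJ_one_le (ha : -1 < a) (hb : -1 < b) (hab : a + b ≠ -1) :
    ∃ C > 0, ∀ L : ℕ, 1 ≤ L → ∀ x : ℝ,
      |dirichletJ a b L 1 x| ≤ C * (L : ℝ) ^ (a + 1) * |jacobiP (a + 1) b L x| := by
  obtain ⟨C, hC, h⟩ := exists_Gamma_natCast_add_div_le
    (show 0 < a + b + 2 by linarith) (show 0 < b + 1 by linarith)
  have hκ : 0 < 2 ^ (a + b + 1) * Gamma (a + 1) :=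
    mul_pos (rpow_pos_of_pos two_pos _) (Gamma_pos_of_pos (by linarith))
  refine ⟨C / (2 ^ (a + b + 1) * Gamma (a + 1)), by positivity, fun L hL x ↦ ?_⟩
  have hΓab : 0 < Gamma (L + a + b + 2) :=
    Gamma_pos_of_pos (by linarith [L.cast_nonneg (α := ℝ)])
  have hΓb : 0 < Gamma (L + b + 1) := Gamma_pos_of_pos (by linarith [L.cast_nonneg (α := ℝ)])
  have hL := h L hL
  rw [← add_assoc, ← add_assoc, ← add_assoc, show a + b + 2 - (b + 1) = a + 1 by ring] at hL
  rw [dirichletJ_one_eq ha hb hab, abs_mul, abs_of_pos (by positivity), div_mul_eq_div_div_swap,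
    div_mul_eq_mul_div C]
  gcongr

end DirichletKernel

theorem dirichletJ_endpoint_bounds_general {α β : ℝ}
    (hα : -1 < α) (hβ : -1 < β) (hαβ : α + β ≠ -1) (c : ℝ) :
    ∃ C : ℝ, 0 < C ∧
      ∀ L : ℕ, 1 ≤ L →
        (∀ θ : ℝ, 0 ≤ θ → θ ≤ c / (L : ℝ) →
          |dirichletJ α β L 1 (Real.cos θ)| ≤ C * (L : ℝ) ^ (2 * α + 2)) ∧
        (∀ θ : ℝ, Real.pi - c / (L : ℝ) ≤ θ → θ ≤ Real.pi →
          |dirichletJ α β L 1 (Real.cos θ)| ≤ C * (L : ℝ) ^ (α + β + 1)) := by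
  have hα₁ : -1 < α + 1 := by linarith
  obtain ⟨A, hA, hkernel⟩ := exists_abs_dirichletJ_one_le hα hβ hαβ
  obtain ⟨B₀, hB₀, hzero⟩ := exists_abs_jacobiP_cos_le hα₁ hβ c
  obtain ⟨B₁, -, hpi⟩ := exists_abs_jacobiP_cos_le_near_pi hα₁ hβ c
  have hbound {L : ℕ} (hL : 1 ≤ L) {x B γ : ℝ} (hB : B ≤ max B₀ B₁)
      (hP : |jacobiP (α + 1) β L x| ≤ B * (L : ℝ) ^ γ) :
      |dirichletJ α β L 1 x| ≤ A * max B₀ B₁ * (L : ℝ) ^ (α + 1 + γ) :=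
    calc |dirichletJ α β L 1 x|
        ≤ A * (L : ℝ) ^ (α + 1) * (max B₀ B₁ * (L : ℝ) ^ γ) := by
          refine (hkernel L hL x).trans ?_
          gcongr
          exact hP.trans (by gcongr)
      _ = A * max B₀ B₁ * (L : ℝ) ^ (α + 1 + γ) := by
          rw [rpow_add (Nat.cast_pos.mpr hL) (α + 1) γ]
          ring
  refine ⟨A * max B₀ B₁, by positivity, fun L hL ↦ ⟨fun θ h₀ h₁ ↦ ?_, fun θ h₀ h₁ ↦ ?_⟩⟩
  · rw [show 2 * α + 2 = α + 1 + (α + 1) by ring]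
    exact hbound hL (le_max_left _ _) (hzero L hL θ (by rwa [abs_of_nonneg h₀]))
  · rw [show α + β + 1 = α + 1 + β by ring]
    refine hbound hL (le_max_right _ _) (hpi L hL θ ?_)
    rw [abs_of_nonneg (by linarith)]
    linarith

/-- Lemma 2.6: bounds for the generalised Dirichlet kernel near the endpoints:
for `α,β > −1/2` and fixed `c⁽¹⁾ > 0`,
i) `|v_L^{(α,β)}(1,cos θ)| ≤ C L^{2α+2}` for `0 ≤ θ ≤ c⁽¹⁾/L`, and
ii) `|v_L^{(α,β)}(1,cos θ)| ≤ C L^{α+β+1}` for `π − c⁽¹⁾/L ≤ θ ≤ π`. -/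
theorem dirichletJ_endpoint_bounds (α β : ℝ)
    (hα : -(1 / 2 : ℝ) < α) (hβ : -(1 / 2 : ℝ) < β)
    (c₁ : ℝ) (hc₁ : 0 < c₁) :
    ∃ C : ℝ, 0 < C ∧
      ∀ L : ℕ, 1 ≤ L →
        (∀ θ : ℝ, 0 ≤ θ → θ ≤ c₁ / (L : ℝ) →
          |dirichletJ α β L 1 (Real.cos θ)| ≤ C * (L : ℝ) ^ (2 * α + 2)) ∧
        (∀ θ : ℝ, Real.pi - c₁ / (L : ℝ) ≤ θ → θ ≤ Real.pi →
          |dirichletJ α β L 1 (Real.cos θ)| ≤ C * (L : ℝ) ^ (α + β + 1)) :=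
  dirichletJ_endpoint_bounds_general (by linarith) (by linarith) (by linarith) c₁
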